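/- arXiv:2007.07738 — 7 statements merged into one kernel-verified Lean document; each statement's English description precedes it below -/
import Mathlib

section
/- Let D be a finite digraph, let T ⊆ V(D) with |T| = s, let k ≥ 0 be an integer, and let r be an integer with r ≥ ⌊s/2⌋. If T is (k,r)-linked in D, then D admits a haven of order k+1. -/
/-- A digraph on vertex type `V`, given by its adjacency relation
(loops are allowed; parallel edges are irrelevant here). -/
structure Dgraph (V : Type) where
  Adj : V → V → Prop

namespace Dgraph

variable {V : Type}

/-- There is a directed walk from `u` to `v` in `D` using only vertices of `S`. -/
def ReachIn (D : Dgraph V) (S : Set V) (u v : V) : Prop :=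
  u ∈ S ∧ v ∈ S ∧ Relation.ReflTransGen (fun a b => a ∈ S ∧ b ∈ S ∧ D.Adj a b) u v

/-- The subdigraph of `D` induced on `S` is strongly connected. -/
def StronglyConnectedOn (D : Dgraph V) (S : Set V) : Prop :=
  ∀ u ∈ S, ∀ v ∈ S, D.ReachIn S u v

/-- `C` is the vertex set of a strong component of the subdigraph of `D` induced on `A`,
i.e. a maximal subset of `A` inducing a strongly connected subdigraph. -/
def IsStrongComponentOn (D : Dgraph V) (A C : Set V) : Prop :=
  C ⊆ A ∧ D.StronglyConnectedOn C ∧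
    ∀ C' : Set V, C ⊆ C' → C' ⊆ A → D.StronglyConnectedOn C' → C' = C

/-- `Z` is a `(T, r)`-balanced separator of `D`: every strong component of `D \ Z`
contains at most `r` vertices of `T`. -/
def IsBalancedSeparator (D : Dgraph V) (T : Set V) (r : ℕ) (Z : Set V) : Prop :=
  ∀ C : Set V, D.IsStrongComponentOn Zᶜ C → (C ∩ T).ncard ≤ r

/-- `T` is `(k, r)`-linked in `D`: every `(T, r)`-balanced separator has size at least `k + 1`. -/
def IsLinked (D : Dgraph V) (T : Set V) (k r : ℕ) : Prop :=
  ∀ Z : Set V, D.IsBalancedSeparator T r Z → k + 1 ≤ Z.ncard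

/-- `β` is a haven of order `k` in `D`: it assigns to every `Z` with `|Z| ≤ k - 1`
the vertex set of a strong component of `D \ Z`, monotonically. -/
def IsHaven (D : Dgraph V) (k : ℕ) (β : Set V → Set V) : Prop :=
  (∀ Z : Set V, Z.ncard < k → D.IsStrongComponentOn Zᶜ (β Z)) ∧
  (∀ Z Z' : Set V, Z.ncard < k → Z' ⊆ Z → β Z ⊆ β Z')

/-- A bramble in `D`: a family of (vertex sets of) strongly connected subdigraphs
any two of which touch. -/
def IsBramble (D : Dgraph V) (ℬ : Set (Set V)) : Prop :=
  (∀ B ∈ ℬ, D.StronglyConnectedOn B) ∧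
  ∀ B ∈ ℬ, ∀ B' ∈ ℬ,
    (B ∩ B').Nonempty ∨
      ((∃ u ∈ B, ∃ v ∈ B', D.Adj u v) ∧ (∃ u ∈ B', ∃ v ∈ B, D.Adj u v))

/-- `C` is a hitting set of the family `ℬ`. -/
def IsHittingSet (ℬ : Set (Set V)) (C : Set V) : Prop :=
  ∀ B ∈ ℬ, (C ∩ B).Nonempty

/-- The order of a bramble: the minimum size of a hitting set. -/
noncomputable def brambleOrder (ℬ : Set (Set V)) : ℕ :=
  sInf {n : ℕ | ∃ C : Set V, IsHittingSet ℬ C ∧ C.ncard = n}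

/-- The `T`-bramble with threshold `g`: all induced strongly connected subdigraphs
containing at least `g` vertices of `T`. -/
def TBramble (D : Dgraph V) (T : Set V) (g : ℕ) : Set (Set V) :=
  {B : Set V | D.StronglyConnectedOn B ∧ g ≤ (B ∩ T).ncard}

/-- The restricted bramble `ℬ(X)`: elements of `ℬ` intersecting `X`. -/
def restrictedBramble (ℬ : Set (Set V)) (X : Set V) : Set (Set V) :=
  {B ∈ ℬ | (B ∩ X).Nonempty}

/-- The complement bramble `ℬ̄(X)`: elements of `ℬ` disjoint from `X`. -/
def complementBramble (ℬ : Set (Set V)) (X : Set V) : Set (Set V) :=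
  {B ∈ ℬ | B ∩ X = ∅}

/-- A directed path in `D`, as a duplicate-free list of consecutively adjacent vertices. -/
def IsPath (D : Dgraph V) (P : List V) : Prop :=
  P.Nodup ∧ P.Chain' D.Adj

/-- A directed path in `D` starting in `A` and ending in `B`. -/
def IsPathFromTo (D : Dgraph V) (P : List V) (A B : Set V) : Prop :=
  D.IsPath P ∧ ∃ h : P ≠ [], P.head h ∈ A ∧ P.getLast h ∈ B

/-- There are `n` pairwise vertex-disjoint directed paths from `A` to `B` in `D`. -/
def HasDisjointPaths (D : Dgraph V) (A B : Set V) (n : ℕ) : Prop :=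
  ∃ Ps : Fin n → List V, (∀ i, D.IsPathFromTo (Ps i) A B) ∧
    ∀ i j, i ≠ j → ∀ v, v ∈ Ps i → v ∉ Ps j

/-- `A` is well-linked in `D`. -/
def WellLinked (D : Dgraph V) (A : Set V) : Prop :=
  ∀ X Y : Set V, X ⊆ A → Y ⊆ A → Disjoint X Y → X.ncard = Y.ncard →
    D.HasDisjointPaths X Y X.ncard

end Dgraph

theorem Dgraph.ReachIn.mono' {V : Type} {D : Dgraph V} {S S' : Set V} (h : S ⊆ S') {u v : V}
    (hr : D.ReachIn S u v) : D.ReachIn S' u v :=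
  ⟨h hr.1, h hr.2.1, Relation.ReflTransGen.mono (fun _ _ hab => ⟨h hab.1, h hab.2.1, hab.2.2⟩) _ _ hr.2.2⟩

theorem Dgraph.StronglyConnectedOn.union' {V : Type} {D : Dgraph V} {S S' : Set V}
    (h : D.StronglyConnectedOn S) (h' : D.StronglyConnectedOn S') {w : V}
    (hw : w ∈ S) (hw' : w ∈ S') : D.StronglyConnectedOn (S ∪ S') := by
  have key : ∀ u ∈ S ∪ S', D.ReachIn (S ∪ S') u w ∧ D.ReachIn (S ∪ S') w u := by
    rintro u (hu | hu)
    · exact ⟨(h u hu w hw).mono' Set.subset_union_left, (h w hw u hu).mono' Set.subset_union_left⟩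
    · exact ⟨(h' u hu w hw').mono' Set.subset_union_right,
        (h' w hw' u hu).mono' Set.subset_union_right⟩
  intro u hu v hv
  exact ⟨hu, hv, (key u hu).1.2.2.trans (key v hv).2.2.2⟩

open Dgraph in
/-- if `T ⊆ V(D)` has `|T| = s`, `r ≥ ⌊s/2⌋`, and `T` is `(k, r)`-linked
in the finite digraph `D`, then `D` admits a haven of order `k + 1`. -/
theorem stmt0 {V : Type} [Finite V] (D : Dgraph V) (T : Set V) (s k r : ℕ)
    (hT : T.ncard = s) (hr : s / 2 ≤ r) (hlinked : D.IsLinked T k r) :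
    ∃ β : Set V → Set V, D.IsHaven (k + 1) β := by
  have key : ∀ Z : Set V, ∃ C : Set V, Z.ncard < k + 1 →
      D.IsStrongComponentOn Zᶜ C ∧ r < (C ∩ T).ncard := by
    intro Z
    by_cases hZ : Z.ncard < k + 1
    · have hn : ¬ D.IsBalancedSeparator T r Z := fun hb => by
        have := hlinked Z hb
        omega
      unfold IsBalancedSeparator at hn
      push Not at hn
      obtain ⟨C, h1, h2⟩ := hn
      exact ⟨C, fun _ => ⟨h1, h2⟩⟩
    · exact ⟨∅, fun h => absurd h hZ⟩
  choose β hβ using key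
  refine ⟨β, fun Z hZ => (hβ Z hZ).1, fun Z Z' hZ hsub => ?_⟩
  have hZ' : Z'.ncard < k + 1 := (Set.ncard_le_ncard hsub (Set.toFinite _)).trans_lt hZ
  obtain ⟨⟨a1, a2, -⟩, a4⟩ := hβ Z hZ
  obtain ⟨⟨b1, b2, b3⟩, b4⟩ := hβ Z' hZ'
  have hne : ((β Z ∩ T) ∩ (β Z' ∩ T)).Nonempty := by
    by_contra hcon
    rw [Set.not_nonempty_iff_eq_empty, ← Set.disjoint_iff_inter_eq_empty] at hcon
    have h1 := Set.ncard_union_eq hcon (Set.toFinite _) (Set.toFinite _)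
    have h2 : ((β Z ∩ T) ∪ (β Z' ∩ T)).ncard ≤ T.ncard :=
      Set.ncard_le_ncard (Set.union_subset Set.inter_subset_right Set.inter_subset_right)
        (Set.toFinite _)
    omega
  obtain ⟨w, hw, hw'⟩ := hne
  have := b3 (β Z ∪ β Z') Set.subset_union_right
    (Set.union_subset (a1.trans (Set.compl_subset_compl.2 hsub)) b1) (a2.union' b2 hw.1 hw'.1)
  rw [← this]
  exact Set.subset_union_left
end

section
/- For every finite digraph D and every integer k ≥ 1, at least one of the following holds: (a) D admits an arboreal decomposition of width at most 3k−2; (b) D admits a haven of order k. -/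
namespace Dgraph

variable {V : Type}

/-- `S` is `Z`-guarded in `D`: `S` is disjoint from `Z` and no directed walk in `D \ Z`
with first and last vertices in `S` uses a vertex outside `Z ∪ S`. -/
def Guarded (D : Dgraph V) (Z S : Set V) : Prop :=
  Disjoint S Z ∧
    ∀ u ∈ S, ∀ v ∈ S, ∀ w, w ∉ Z → w ∉ S →
      ¬(D.ReachIn Zᶜ u w ∧ D.ReachIn Zᶜ w v)

end Dgraph

/-- An arboreal decomposition of a digraph `D`: an arborescence (a finite rooted tree,
encoded by a parent function, with every vertex reaching the root by iterating `par`;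
its edges go from `par v` to `v` for `v ≠ root`), bags `W` partitioning `V(D)` into
nonempty sets, guards `X` on the edges (indexed by their heads), such that for every
edge `e` (into `v ≠ root`) the union of bags `W r` over `r > e` is `X_e`-guarded. -/
structure ArborealDecomp (V : Type) (D : Dgraph V) where
  ι : Type
  finite : Finite ι
  root : ι
  par : ι → ι
  par_root : par root = root
  reaches_root : ∀ r : ι, ∃ n : ℕ, par^[n] r = root
  W : ι → Set V
  X : ι → Set V
  W_nonempty : ∀ r, (W r).Nonempty
  W_cover : ∀ x : V, ∃ r, x ∈ W r
  W_disjoint : ∀ r r', r ≠ r' → Disjoint (W r) (W r')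
  guarded : ∀ v, v ≠ root →
    D.Guarded (X v) (⋃ r ∈ {r : ι | ∃ n, par^[n] r = v}, W r)

namespace ArborealDecomp

variable {V : Type} {D : Dgraph V}

/-- The (heads of) edges incident to `r`: `e ∼ r`. -/
def edgesAt (d : ArborealDecomp V D) (r : d.ι) : Set d.ι :=
  {v | v ≠ d.root ∧ (v = r ∨ d.par v = r)}

/-- `width(r) = |W_r ∪ ⋃_{e ∼ r} X_e|`. -/
noncomputable def widthAt (d : ArborealDecomp V D) (r : d.ι) : ℕ :=
  (d.W r ∪ ⋃ v ∈ d.edgesAt r, d.X v).ncard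

/-- The decomposition has width at most `w`. -/
def HasWidthAtMost (d : ArborealDecomp V D) (w : ℕ) : Prop :=
  ∀ r, d.widthAt r ≤ w + 1

/-- The decomposition is nice. -/
def Nice (d : ArborealDecomp V D) : Prop :=
  (∀ v, v ≠ d.root →
    D.IsStrongComponentOn (d.X v)ᶜ (⋃ r ∈ {r : d.ι | ∃ n, d.par^[n] r = v}, d.W r)) ∧
  (∀ r : d.ι,
    (⋃ v ∈ {v : d.ι | v ≠ d.root ∧ d.par v = r}, d.W v) ∩ (⋃ v ∈ d.edgesAt r, d.X v) = ∅)

end ArborealDecomp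

namespace Dgraph

variable {V : Type}

theorem ReachIn.trans' {D : Dgraph V} {A : Set V} {u v w : V}
    (h : D.ReachIn A u v) (h' : D.ReachIn A v w) : D.ReachIn A u w :=
  ⟨h.1, h'.2.1, h.2.2.trans h'.2.2⟩

theorem ReachIn.mono'_s2 {D : Dgraph V} {A B : Set V} {u v : V} (hAB : A ⊆ B)
    (h : D.ReachIn A u v) : D.ReachIn B u v :=
  ⟨hAB h.1, hAB h.2.1, Relation.ReflTransGen.mono (fun _ _ h => ⟨hAB h.1, hAB h.2.1, h.2.2⟩) _ _ h.2.2⟩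

theorem reachIn_refl {D : Dgraph V} {A : Set V} {u : V} (h : u ∈ A) : D.ReachIn A u u :=
  ⟨h, h, .refl⟩

theorem ReachIn.restrict {D : Dgraph V} {A B : Set V} {u w : V} (h : D.ReachIn A u w)
    (hB : ∀ y, D.ReachIn A u y → D.ReachIn A y w → y ∈ B) : D.ReachIn B u w := by
  obtain ⟨hu, hw, h⟩ := h
  induction h using Relation.ReflTransGen.head_induction_on with
  | refl => exact reachIn_refl (hB _ (reachIn_refl hw) (reachIn_refl hw))
  | head hab hbc ih =>
    rename_i a b
    have hab' : D.ReachIn A a b := ⟨hab.1, hab.2.1, .single hab⟩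
    have hbw : D.ReachIn A b w := ⟨hab.2.1, hw, hbc⟩
    have ihB := ih (fun y h1 h2 => hB y (hab'.trans' h1) h2) hab.2.1
    have ha : a ∈ B := hB a (reachIn_refl hu) (hab'.trans' hbw)
    have hb : b ∈ B := ihB.1
    exact ReachIn.trans' ⟨ha, hb, .single ⟨ha, hb, hab.2.2⟩⟩ ihB

/-- The strong component of `x` in `A`. -/
def scc (D : Dgraph V) (A : Set V) (x : V) : Set V :=
  {y | D.ReachIn A x y ∧ D.ReachIn A y x}

theorem scc_subset {D : Dgraph V} {A : Set V} {x : V} : D.scc A x ⊆ A := fun _ h => h.1.2.1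

theorem mem_scc_self {D : Dgraph V} {A : Set V} {x : V} (h : x ∈ A) : x ∈ D.scc A x :=
  ⟨reachIn_refl h, reachIn_refl h⟩

theorem scc_eq_of_mem {D : Dgraph V} {A : Set V} {x y : V} (h : y ∈ D.scc A x) :
    D.scc A y = D.scc A x := by
  ext z
  exact ⟨fun hz => ⟨h.1.trans' hz.1, hz.2.trans' h.2⟩, fun hz => ⟨h.2.trans' hz.1, hz.2.trans' h.1⟩⟩

theorem scc_strong {D : Dgraph V} {A : Set V} {x : V} : D.StronglyConnectedOn (D.scc A x) := by
  intro u hu v hv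
  refine ReachIn.restrict (hu.2.trans' hv.1) fun y h1 h2 => ⟨hu.1.trans' h1, h2.trans' hv.2⟩

theorem scc_isStrong {D : Dgraph V} {A : Set V} {x : V} (hx : x ∈ A) :
    D.IsStrongComponentOn A (D.scc A x) := by
  refine ⟨scc_subset, scc_strong, fun C' h1 h2 h3 => Set.Subset.antisymm (fun y hy => ?_) h1⟩
  have hxC := h1 (mem_scc_self hx)
  exact ⟨(h3 x hxC y hy).mono'_s2 h2, (h3 y hy x hxC).mono'_s2 h2⟩

theorem strong_subset_comp {D : Dgraph V} {A C C' : Set V} {t : V}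
    (hC : D.StronglyConnectedOn C) (hCA : C ⊆ A) (hC' : D.IsStrongComponentOn A C')
    (h : t ∈ C) (h' : t ∈ C') : C ⊆ C' := by
  have key : C' ∪ C = C' := by
    refine hC'.2.2 _ Set.subset_union_left (Set.union_subset hC'.1 hCA) ?_
    have h1 : ∀ u ∈ C' ∪ C, D.ReachIn (C' ∪ C) u t ∧ D.ReachIn (C' ∪ C) t u := by
      rintro u (hu | hu)
      · exact ⟨(hC'.2.1 u hu t h').mono'_s2 Set.subset_union_left,
          (hC'.2.1 t h' u hu).mono'_s2 Set.subset_union_left⟩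
      · exact ⟨(hC u hu t h).mono'_s2 Set.subset_union_right,
          (hC t h u hu).mono'_s2 Set.subset_union_right⟩
    intro u hu v hv
    exact (h1 u hu).1.trans' (h1 v hv).2
  rw [← key]; exact Set.subset_union_right

/-- No haven of order `k`: small sets have small balanced separators. -/
theorem exists_separator [Finite V] {D : Dgraph V} {k : ℕ} (hk : 1 ≤ k)
    (hno : ¬ ∃ β : Set V → Set V, D.IsHaven k β) (X : Set V) (hX : X.ncard ≤ 2 * k - 1) :
    ∃ Z : Set V, Z.ncard < k ∧ ∀ C, D.IsStrongComponentOn Zᶜ C → (C ∩ X).ncard < k := by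
  by_contra hcon
  push Not at hcon
  apply hno
  have : ∀ Z : Set V, ∃ C, Z.ncard < k → D.IsStrongComponentOn Zᶜ C ∧ k ≤ (C ∩ X).ncard := by
    intro Z
    by_cases hZ : Z.ncard < k
    · obtain ⟨C, hC⟩ := hcon Z hZ
      exact ⟨C, fun _ => hC⟩
    · exact ⟨∅, fun h => absurd h hZ⟩
  choose β hβ using this
  refine ⟨β, fun Z hZ => (hβ Z hZ).1, fun Z Z' hZ hsub => ?_⟩
  have hZ' : Z'.ncard < k := lt_of_le_of_lt (Set.ncard_le_ncard hsub) hZ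
  obtain ⟨h1, h2⟩ := hβ Z hZ
  obtain ⟨h1', h2'⟩ := hβ Z' hZ'
  have hne : ((β Z ∩ X) ∩ (β Z' ∩ X)).Nonempty := by
    by_contra hemp
    have hdisj : Disjoint (β Z ∩ X) (β Z' ∩ X) :=
      Set.disjoint_iff_inter_eq_empty.2 (Set.not_nonempty_iff_eq_empty.1 hemp)
    have := Set.ncard_union_eq hdisj
    have hle : ((β Z ∩ X) ∪ (β Z' ∩ X)).ncard ≤ X.ncard :=
      Set.ncard_le_ncard (Set.union_subset Set.inter_subset_right Set.inter_subset_right)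
    omega
  obtain ⟨t, ht, ht'⟩ := hne
  exact strong_subset_comp h1.2.1 (h1.1.trans (Set.compl_subset_compl.2 hsub)) h1' ht.1 ht'.1

theorem child_guarded {D : Dgraph V} {X S Z Z' : Set V} {x : V} (hS : D.Guarded X S)
    (hZ : Z ⊆ Z') :
    D.Guarded (Z' ∪ (X ∩ D.scc Zᶜ x)) (D.scc (S \ Z') x) := by
  have hsubZ : S \ Z' ⊆ Zᶜ := fun y hy hyZ => hy.2 (hZ hyZ)
  refine ⟨?_, ?_⟩
  · rw [Set.disjoint_left]
    rintro y hy (h | h)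
    · exact (scc_subset hy).2 h
    · exact Set.disjoint_left.1 hS.1 (scc_subset hy).1 h.1
  · rintro u hu v hv w hw hwC ⟨h1, h2⟩
    have hZc : (Z' ∪ (X ∩ D.scc Zᶜ x))ᶜ ⊆ Zᶜ := fun y hy hyZ => hy (Or.inl (hZ hyZ))
    have hxu := hu.1.mono'_s2 hsubZ
    have hvx := hv.2.mono'_s2 hsubZ
    have key : ∀ y, D.ReachIn (Z' ∪ (X ∩ D.scc Zᶜ x))ᶜ u y →
        D.ReachIn (Z' ∪ (X ∩ D.scc Zᶜ x))ᶜ y v → y ∈ (X ∪ Z')ᶜ := by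
      intro y hy1 hy2 hmem
      have hy := hy1.2.1
      have hys : y ∈ D.scc Zᶜ x :=
        ⟨hxu.trans' (hy1.mono'_s2 hZc), (hy2.mono'_s2 hZc).trans' hvx⟩
      rcases hmem with h | h
      · exact hy (Or.inr ⟨h, hys⟩)
      · exact hy (Or.inl h)
    have h1' : D.ReachIn (X ∪ Z')ᶜ u w := h1.restrict fun y a b => key y a (b.trans' h2)
    have h2' : D.ReachIn (X ∪ Z')ᶜ w v := h2.restrict fun y a b => key y (h1.trans' a) b
    have hXc : (X ∪ Z')ᶜ ⊆ Xᶜ := fun y hy hyX => hy (Or.inl hyX)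
    have key2 : ∀ y, D.ReachIn (X ∪ Z')ᶜ u y → D.ReachIn (X ∪ Z')ᶜ y v → y ∈ S \ Z' := by
      intro y hy1 hy2
      have hy := hy1.2.1
      refine ⟨?_, fun h => hy (Or.inr h)⟩
      by_contra hyS
      exact hS.2 u (scc_subset hu).1 v (scc_subset hv).1 y (fun h => hy (Or.inl h)) hyS
        ⟨hy1.mono'_s2 hXc, hy2.mono'_s2 hXc⟩
    have h1'' : D.ReachIn (S \ Z') u w := h1'.restrict fun y a b => key2 y a (b.trans' h2')
    have h2'' : D.ReachIn (S \ Z') w v := h2'.restrict fun y a b => key2 y (h1'.trans' a) b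
    exact hwC ⟨hu.1.trans' h1'', h2''.trans' hv.2⟩

/-- A partial arboreal decomposition, of the vertex set `S`, guarded by `X₀`. -/
structure PD (D : Dgraph V) (k : ℕ) (S X₀ : Set V) where
  ι : Type
  finite : Finite ι
  root : ι
  par : ι → ι
  par_root : par root = root
  reaches_root : ∀ r : ι, ∃ n : ℕ, par^[n] r = root
  W : ι → Set V
  X : ι → Set V
  X_root : X root = X₀
  W_nonempty : ∀ r, (W r).Nonempty
  W_cover : ∀ x : V, x ∈ S ↔ ∃ r, x ∈ W r
  W_disjoint : ∀ r r', r ≠ r' → Disjoint (W r) (W r')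
  guarded : ∀ v, D.Guarded (X v) (⋃ r ∈ {r : ι | ∃ n, par^[n] r = v}, W r)
  width : ∀ r, (W r ∪ X r ∪ ⋃ v ∈ {v | v ≠ root ∧ par v = r}, X v).ncard ≤ 3 * k - 1

section glue

variable {κ : Type} {ι : κ → Type} (root : ∀ c, ι c) (par : ∀ c, ι c → ι c)

open Classical in
/-- The parent function of the glued tree. -/
noncomputable def gpar : Option (Σ c, ι c) → Option (Σ c, ι c)
  | none => none
  | some ⟨c, i⟩ => if i = root c then none else some ⟨c, par c i⟩

theorem gpar_iter_none (n : ℕ) : (gpar root par)^[n] none = none := by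
  induction n with
  | zero => rfl
  | succ n ih => rw [Function.iterate_succ_apply]; exact ih

theorem gpar_root (c : κ) : gpar root par (some ⟨c, root c⟩) = none := by
  simp [gpar]

theorem gpar_ne {c : κ} {i : ι c} (h : i ≠ root c) :
    gpar root par (some ⟨c, i⟩) = some ⟨c, par c i⟩ := by
  simp [gpar, h]

theorem gpar_desc (hroot : ∀ c, par c (root c) = root c) (c : κ) (j : ι c) (n : ℕ) :
    ∀ i, (par c)^[n] i = j → ∃ m, (gpar root par)^[m] (some ⟨c, i⟩) = some ⟨c, j⟩ := by
  induction n with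
  | zero => rintro i rfl; exact ⟨0, rfl⟩
  | succ n ih =>
    intro i h
    rw [Function.iterate_succ_apply] at h
    by_cases hi : i = root c
    · subst hi
      rw [hroot] at h
      exact ih _ h
    · obtain ⟨m, hm⟩ := ih _ h
      exact ⟨m + 1, by rw [Function.iterate_succ_apply, gpar_ne root par hi, hm]⟩

theorem gpar_desc' (c : κ) (j : ι c) (n : ℕ) :
    ∀ r, (gpar root par)^[n] r = some ⟨c, j⟩ →
      ∃ i m, r = some ⟨c, i⟩ ∧ (par c)^[m] i = j := by
  induction n with
  | zero => rintro r rfl; exact ⟨j, 0, rfl, rfl⟩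
  | succ n ih =>
    intro r h
    rw [Function.iterate_succ_apply] at h
    obtain ⟨i, m, h1, h2⟩ := ih _ h
    rcases r with _ | ⟨c', i'⟩
    · simp [gpar] at h1
    · by_cases hi : i' = root c'
      · subst hi
        rw [gpar_root] at h1
        simp at h1
      · rw [gpar_ne root par hi] at h1
        simp only [Option.some.injEq, Sigma.mk.injEq] at h1
        obtain ⟨rfl, h1⟩ := h1
        have h1 := eq_of_heq h1
        exact ⟨i', m + 1, rfl, by rw [Function.iterate_succ_apply, h1, h2]⟩

end glue

theorem exists_PD [Finite V] {D : Dgraph V} {k : ℕ} (hk : 1 ≤ k)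
    (hno : ¬ ∃ β : Set V → Set V, D.IsHaven k β) (N : ℕ) :
    ∀ S X : Set V, S.ncard ≤ N → S.Nonempty → X.ncard ≤ 2 * k - 1 → D.Guarded X S →
      Nonempty (PD D k S X) := by
  induction N with
  | zero =>
    intro S X h hne
    exact absurd hne (Set.not_nonempty_iff_eq_empty.2
      ((Set.ncard_eq_zero).1 (Nat.le_zero.1 h)))
  | succ N ih =>
    intro S X hN hne hX hG
    obtain ⟨s, hs⟩ := hne
    obtain ⟨Z, hZk, hZ⟩ := exists_separator hk hno X hX
    obtain ⟨Z', hZ'⟩ : ∃ Z', Z' = insert s Z := ⟨_, rfl⟩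
    have hZZ' : Z ⊆ Z' := hZ' ▸ Set.subset_insert s Z
    have hsZ' : s ∈ Z' := hZ' ▸ Set.mem_insert s Z
    have hZ'k : Z'.ncard ≤ k := by
      rw [hZ']; exact (Set.ncard_insert_le s Z).trans hZk
    let κ : Type := {C : Set V // ∃ x ∈ S \ Z', C = D.scc (S \ Z') x}
    have hchild : ∀ c : κ, ∃ Xc : Set V, Xc ⊆ Z' ∪ X ∧ Nonempty (PD D k c.1 Xc) := by
      rintro ⟨C, x, hx, rfl⟩
      have hxZ : x ∈ Zᶜ := fun h => hx.2 (hZZ' h)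
      refine ⟨Z' ∪ (X ∩ D.scc Zᶜ x),
        Set.union_subset_union_right _ Set.inter_subset_left, ?_⟩
      refine ih _ _ ?_ ⟨x, mem_scc_self hx⟩ ?_ (child_guarded hG hZZ')
      · have hss : D.scc (S \ Z') x ⊂ S := by
          refine ⟨fun y hy => (scc_subset hy).1, fun h => (scc_subset (h hs)).2 hsZ'⟩
        have := Set.ncard_lt_ncard hss
        show (D.scc (S \ Z') x).ncard ≤ N
        omega
      · have h1 := Set.ncard_union_le Z' (X ∩ D.scc Zᶜ x)
        have h2 := hZ _ (scc_isStrong (D := D) hxZ)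
        rw [Set.inter_comm] at h2
        omega
    choose Xc hXc hP using hchild
    have P : ∀ c : κ, PD D k c.1 (Xc c) := fun c => (hP c).some
    have hsub : ∀ c : κ, c.1 ⊆ S \ Z' := by
      rintro ⟨C, x, hx, rfl⟩
      exact scc_subset
    have hWsub : ∀ c i, (P c).W i ⊆ c.1 := fun c i x hx => ((P c).W_cover x).2 ⟨i, hx⟩
    have hκdisj : ∀ c c' : κ, c ≠ c' → Disjoint c.1 c'.1 := by
      rintro ⟨C, x, hx, rfl⟩ ⟨C', x', hx', rfl⟩ hcc
      rw [Set.disjoint_left]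
      intro y hy hy'
      exact hcc (Subtype.ext ((scc_eq_of_mem hy).symm.trans (scc_eq_of_mem hy')))
    let root : ∀ c, (P c).ι := fun c => (P c).root
    let par : ∀ c, (P c).ι → (P c).ι := fun c => (P c).par
    let W : Option (Σ c, (P c).ι) → Set V := fun r =>
      match r with
      | none => Z' ∩ S
      | some ⟨c, i⟩ => (P c).W i
    let XX : Option (Σ c, (P c).ι) → Set V := fun r =>
      match r with
      | none => X
      | some ⟨c, i⟩ => (P c).X i
    have hroot : ∀ c, par c (root c) = root c := fun c => (P c).par_root
    have hreach : ∀ r, ∃ n, (gpar root par)^[n] r = none := by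
      rintro (_ | ⟨c, i⟩)
      · exact ⟨0, rfl⟩
      · obtain ⟨n, hn⟩ := (P c).reaches_root i
        obtain ⟨m, hm⟩ := gpar_desc root par hroot c (root c) n i hn
        exact ⟨m + 1, by rw [Function.iterate_succ_apply', hm, gpar_root]⟩
    have hcover : ∀ x, x ∈ S ↔ ∃ r, x ∈ W r := by
      intro x
      constructor
      · intro hx
        by_cases hxZ : x ∈ Z'
        · exact ⟨none, hxZ, hx⟩
        · obtain ⟨i, hi⟩ := ((P ⟨_, x, ⟨hx, hxZ⟩, rfl⟩).W_cover x).1 (mem_scc_self ⟨hx, hxZ⟩)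
          exact ⟨some ⟨_, i⟩, hi⟩
      · rintro ⟨_ | ⟨c, i⟩, hx⟩
        · exact hx.2
        · exact (hsub c (hWsub c i hx)).1
    refine ⟨{ ι := Option (Σ c, (P c).ι), finite := ?_, root := none, par := gpar root par
              par_root := rfl, reaches_root := hreach, W := W, X := XX, X_root := rfl
              W_nonempty := ?_, W_cover := hcover, W_disjoint := ?_, guarded := ?_
              width := ?_ }⟩
    · have : ∀ c, Finite (P c).ι := fun c => (P c).finite
      infer_instance
    · rintro (_ | ⟨c, i⟩)
      · exact ⟨s, hsZ', hs⟩
      · exact (P c).W_nonempty i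
    · have aux : ∀ c i, Disjoint (Z' ∩ S) ((P c).W i) := by
        intro c i
        rw [Set.disjoint_left]
        intro y hy hy'
        exact (hsub c (hWsub c i hy')).2 hy.1
      rintro (_ | ⟨c, i⟩) (_ | ⟨c', i'⟩) hne
      · exact absurd rfl hne
      · exact aux c' i'
      · exact (aux c i).symm
      · by_cases hc : c = c'
        · subst hc
          exact (P c).W_disjoint i i' (fun h => hne (by rw [h]))
        · exact (hκdisj c c' hc).mono (hWsub c i) (hWsub c' i')
    · rintro (_ | ⟨c, j⟩)
      · have : (⋃ r ∈ {r | ∃ n, (gpar root par)^[n] r = none}, W r) = S := by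
          ext x
          rw [hcover x]
          simp only [Set.mem_iUnion, Set.mem_ofPred_eq, exists_prop]
          exact ⟨fun ⟨r, _, h⟩ => ⟨r, h⟩, fun ⟨r, h⟩ => ⟨r, hreach r, h⟩⟩
        rw [this]
        exact hG
      · have : (⋃ r ∈ {r | ∃ n, (gpar root par)^[n] r = some ⟨c, j⟩}, W r) =
            ⋃ r ∈ {r | ∃ n, (P c).par^[n] r = j}, (P c).W r := by
          ext x
          simp only [Set.mem_iUnion, Set.mem_ofPred_eq, exists_prop]
          constructor
          · rintro ⟨r, ⟨n, hn⟩, hx⟩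
            obtain ⟨i, m, rfl, hm⟩ := gpar_desc' root par c j n r hn
            exact ⟨i, ⟨m, hm⟩, hx⟩
          · rintro ⟨i, ⟨n, hn⟩, hx⟩
            exact ⟨some ⟨c, i⟩, gpar_desc root par hroot c j n i hn, hx⟩
        rw [this]
        exact (P c).guarded j
    · rintro (_ | ⟨c, j⟩)
      · have : (W none ∪ XX none ∪ ⋃ v ∈ {v | v ≠ none ∧ gpar root par v = none}, XX v)
            ⊆ Z' ∪ X := by
          refine Set.union_subset (Set.union_subset ?_ Set.subset_union_right) ?_
          · exact Set.inter_subset_left.trans Set.subset_union_left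
          · refine Set.iUnion₂_subset ?_
            rintro (_ | ⟨c, i⟩) ⟨h1, h2⟩
            · exact absurd rfl h1
            · by_cases hi : i = root c
              · subst hi
                show (P c).X (P c).root ⊆ _
                rw [(P c).X_root]
                exact hXc c
              · rw [gpar_ne root par hi] at h2
                cases h2
        have h1 := Set.ncard_le_ncard this
        have h2 := Set.ncard_union_le Z' X
        omega
      · refine (Set.ncard_le_ncard ?_).trans ((P c).width j)
        refine Set.union_subset_union_right _ ?_
        refine Set.iUnion₂_subset ?_
        rintro (_ | ⟨c', i⟩) ⟨h1, h2⟩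
        · exact absurd rfl h1
        · by_cases hi : i = root c'
          · subst hi
            rw [gpar_root] at h2
            cases h2
          · rw [gpar_ne root par hi] at h2
            simp only [Option.some.injEq, Sigma.mk.injEq] at h2
            obtain ⟨rfl, h2⟩ := h2
            have h2 := eq_of_heq h2
            intro x hx
            simp only [Set.mem_iUnion]
            exact ⟨i, ⟨hi, h2⟩, hx⟩

end Dgraph

open Dgraph in
/-- every finite digraph `D` either admits an arboreal decomposition of
width at most `3k - 2`, or admits a haven of order `k`. -/
theorem stmt2 {V : Type} [Finite V] (D : Dgraph V) (k : ℕ) (hk : 1 ≤ k) :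
    (∃ d : ArborealDecomp V D, d.HasWidthAtMost (3 * k - 2)) ∨
    (∃ β : Set V → Set V, D.IsHaven k β) := by
  by_cases hno : ∃ β : Set V → Set V, D.IsHaven k β
  · exact Or.inr hno
  left
  rcases isEmpty_or_nonempty V with hV | ⟨⟨x⟩⟩
  · exfalso
    apply hno
    refine ⟨fun _ => ∅, fun Z _ => ⟨Set.empty_subset _, fun u hu => hu.elim, ?_⟩,
      fun _ _ _ _ => subset_rfl⟩
    intro C' _ _ _
    exact Set.eq_empty_of_isEmpty C'
  · obtain ⟨P⟩ := exists_PD hk hno _ Set.univ ∅ le_rfl ⟨x, trivial⟩ (by simp)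
      ⟨Set.disjoint_empty _, fun u _ v _ w _ hw => absurd trivial hw⟩
    refine ⟨{ ι := P.ι, finite := P.finite, root := P.root, par := P.par
              par_root := P.par_root, reaches_root := P.reaches_root, W := P.W, X := P.X
              W_nonempty := P.W_nonempty, W_cover := fun x => (P.W_cover x).1 trivial
              W_disjoint := P.W_disjoint, guarded := fun v _ => P.guarded v }, ?_⟩
    intro r
    refine (Set.ncard_le_ncard ?_).trans ((P.width r).trans (by omega))
    refine Set.union_subset (Set.subset_union_left.trans Set.subset_union_left) ?_
    refine Set.iUnion₂_subset ?_
    rintro v ⟨hv, rfl | hv'⟩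
    · exact Set.subset_union_right.trans Set.subset_union_left
    · intro y hy
      refine Or.inr ?_
      simp only [Set.mem_iUnion]
      exact ⟨v, ⟨hv, hv'⟩, hy⟩
end

section
/- Let D be a finite digraph, let k ≥ 1 be an integer, and let T ⊆ V(D) be a (k−1,k−1)-linked set of size 2k−1. Then the T-bramble B_T is a bramble of order exactly k, and a set X ⊆ V(D) is a hitting set of B_T if and only if X is a (T,k−1)-balanced separator of D. -/
open Dgraph in
/-- if `T` is a `(k-1, k-1)`-linked set of size `2k - 1` in the finite
digraph `D`, then the `T`-bramble `B_T` is a bramble of order exactly `k`, and a set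
`X` is a hitting set of `B_T` if and only if `X` is a `(T, k-1)`-balanced separator. -/
theorem stmt5 {V : Type} [Finite V] (D : Dgraph V) (k : ℕ) (hk : 1 ≤ k) (T : Set V)
    (hT : T.ncard = 2 * k - 1) (hlinked : D.IsLinked T (k - 1) (k - 1)) :
    D.IsBramble (D.TBramble T k) ∧ brambleOrder (D.TBramble T k) = k ∧
      ∀ X : Set V, IsHittingSet (D.TBramble T k) X ↔ D.IsBalancedSeparator T (k - 1) X := by
  have inter : ∀ A B : Set V, A ⊆ T → B ⊆ T → k ≤ A.ncard → k ≤ B.ncard →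
      (A ∩ B).Nonempty := by
    intro A B hA hB hkA hkB
    by_contra h
    rw [Set.not_nonempty_iff_eq_empty] at h
    have h1 := Set.ncard_union_add_ncard_inter A B
    have h2 : (A ∪ B).ncard ≤ T.ncard :=
      Set.ncard_le_ncard (Set.union_subset hA hB) (Set.toFinite T)
    rw [h, Set.ncard_empty] at h1
    omega
  have hiff : ∀ X : Set V,
      IsHittingSet (D.TBramble T k) X ↔ D.IsBalancedSeparator T (k - 1) X := by
    intro X
    constructor
    · intro h C hC
      by_contra hlt
      obtain ⟨x, hx, hxC⟩ := h C ⟨hC.2.1, by omega⟩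
      exact hC.1 hxC hx
    · intro h B hB
      by_contra hne
      have hBX : B ⊆ Xᶜ := fun x hx hxX => hne ⟨x, hxX, hx⟩
      have hfin : {C : Set V | C ⊆ Xᶜ ∧ D.StronglyConnectedOn C}.Finite := Set.toFinite _
      obtain ⟨C, hBC, hC⟩ := hfin.exists_le_maximal (a := B) ⟨hBX, hB.1⟩
      have h1 := h C ⟨hC.prop.1, hC.prop.2, fun C' h1 h2 h3 =>
        Set.Subset.antisymm (hC.le_of_ge ⟨h2, h3⟩ h1) h1⟩
      have h2 : (B ∩ T).ncard ≤ (C ∩ T).ncard :=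
        Set.ncard_le_ncard (Set.inter_subset_inter_left T hBC) (Set.toFinite _)
      have h3 := hB.2
      omega
  refine ⟨⟨fun B hB => hB.1, fun B hB B' hB' => Or.inl ?_⟩, ?_, hiff⟩
  · obtain ⟨x, hx, hx'⟩ := inter (B ∩ T) (B' ∩ T) Set.inter_subset_right
      Set.inter_subset_right hB.2 hB'.2
    exact ⟨x, hx.1, hx'.1⟩
  · obtain ⟨S, hST, hS⟩ := Set.exists_subset_card_eq (s := T) (n := k) (by omega)
    have hmem : k ∈ {n : ℕ | ∃ C : Set V, IsHittingSet (D.TBramble T k) C ∧ C.ncard = n} := by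
      refine ⟨S, fun B hB => ?_, hS⟩
      obtain ⟨x, hx, hx'⟩ := inter S (B ∩ T) hST Set.inter_subset_right hS.ge hB.2
      exact ⟨x, hx, hx'.1⟩
    apply le_antisymm
    · exact Nat.sInf_le hmem
    · refine le_csInf ⟨k, hmem⟩ ?_
      rintro n ⟨C, hC, rfl⟩
      have := hlinked C ((hiff C).1 hC)
      omega
end

section
/- Let D be a finite digraph, k ≥ 1 an integer, T ⊆ V(D) with |T| = 2k−1, and B_T the T-bramble. For any X, Z ⊆ V(D): Z is a hitting set of the complement bramble B̄_T(X) if and only if Z is a (T \ X, k−1)-balanced separator in the digraph D \ X. -/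
namespace Dgraph

/-- `Z` is an `(S, r)`-balanced separator in the subdigraph of `D` induced on `A`:
every strong component of `D[A] \ Z` contains at most `r` vertices of `S`. -/
def IsBalancedSeparatorOn {V : Type} (D : Dgraph V) (A S : Set V) (r : ℕ) (Z : Set V) :
    Prop :=
  ∀ C : Set V, D.IsStrongComponentOn (A \ Z) C → (C ∩ S).ncard ≤ r

end Dgraph

open Dgraph in
/-- `Z` is a hitting set of the complement bramble `B̄_T(X)` if and only if
`Z` is a `(T \ X, k-1)`-balanced separator in the digraph `D \ X`. -/
theorem stmt7 {V : Type} [Finite V] (D : Dgraph V) (k : ℕ) (hk : 1 ≤ k) (T : Set V)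
    (hT : T.ncard = 2 * k - 1) (X Z : Set V) :
    IsHittingSet (complementBramble (D.TBramble T k) X) Z ↔
      D.IsBalancedSeparatorOn Xᶜ (T \ X) (k - 1) Z := by
  constructor
  · intro h C hC
    obtain ⟨hsub, hsc, -⟩ := hC
    by_contra hcon
    have hle : (C ∩ (T \ X)).ncard ≤ (C ∩ T).ncard :=
      Set.ncard_le_ncard (fun v hv => ⟨hv.1, hv.2.1⟩) (Set.toFinite _)
    have hCX : C ∩ X = ∅ := by
      ext v
      constructor
      · intro hv
        exact (hsub hv.1).1 hv.2
      · intro hv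
        exact hv.elim
    obtain ⟨v, hvZ, hvC⟩ := h C ⟨⟨hsc, by omega⟩, hCX⟩
    exact (hsub hvC).2 hvZ
  · intro h B hB
    obtain ⟨⟨hsc, hcard⟩, hBX⟩ := hB
    by_contra hcon
    have hBA : B ⊆ Xᶜ \ Z := by
      intro v hv
      refine ⟨fun hx => ?_, fun hz => hcon ⟨v, hz, hv⟩⟩
      have hmem : v ∈ B ∩ X := ⟨hv, hx⟩
      rw [hBX] at hmem
      exact hmem
    obtain ⟨C, hBC, hC⟩ := (Set.toFinite {C : Set V | C ⊆ Xᶜ \ Z ∧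
      D.StronglyConnectedOn C}).exists_le_maximal (show B ∈ _ from ⟨hBA, hsc⟩)
    have h1 := h C ⟨hC.prop.1, hC.prop.2, fun C' hCC' hA' hs' =>
      Set.Subset.antisymm (hC.le_of_ge ⟨hA', hs'⟩ hCC') hCC'⟩
    have h2 : (B ∩ T).ncard ≤ (C ∩ (T \ X)).ncard :=
      Set.ncard_le_ncard (fun v hv => ⟨hBC hv.1, hv.2, (hBA hv.1).1⟩) (Set.toFinite _)
    omega
end

section
/- Let D be a finite digraph, k ≥ 1 an integer, T ⊆ V(D) a (k−1,k−1)-linked set of size 2k−1, and B_T the T-bramble. Then there exists a directed path P in D whose vertex set V(P) is a hitting set of B_T. -/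
namespace Dgraph

lemma extend_aux {V : Type} (D : Dgraph V) (B B' : Set V) (v : V) (l : List V)
    (hc : List.IsChain (fun a b => D.Adj b a) (v :: l)) (hn : (v :: l).Nodup)
    (hvB' : v ∉ B') (hlB : ∀ x ∈ l, x ∉ B) (hlB' : ∀ x ∈ l, x ∉ B') (w : V)
    (hr : Relation.ReflTransGen (fun a b => a ∈ B ∧ b ∈ B ∧ D.Adj a b) v w) :
    (∃ u L, List.IsChain (fun a b => D.Adj b a) (u :: L) ∧ (u :: L).Nodup ∧ u ∈ B' ∧
      (∀ x ∈ L, x ∉ B') ∧ l.length < L.length) ∨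
    (∃ m, List.IsChain (fun a b => D.Adj b a) (w :: m ++ l) ∧ (w :: m ++ l).Nodup ∧
      ∀ x ∈ w :: m, x ∉ B') := by
  induction hr with
  | refl => exact Or.inr ⟨[], by simpa using hc, by simpa using hn, by simpa using hvB'⟩
  | @tail b c _ hbc ih =>
    obtain ⟨hb, hcB, hadj⟩ := hbc
    rcases ih with h | ⟨m, h1, h2, h3⟩
    · exact Or.inl h
    by_cases hcm : c ∈ b :: m
    · right
      obtain ⟨s, t, hst⟩ := List.append_of_mem hcm
      have hst' : b :: m ++ l = s ++ (c :: t ++ l) := by rw [hst]; simp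
      rw [hst'] at h1 h2
      refine ⟨t, h1.right_of_append, h2.of_append_right, fun x hx => h3 x ?_⟩
      rw [hst]; exact List.mem_append_right _ hx
    · have hcl : c ∉ b :: m ++ l := by
        intro h
        rcases List.mem_append.1 h with h | h
        · exact hcm h
        · exact hlB c h hcB
      have k1 : List.IsChain (fun a b => D.Adj b a) (c :: (b :: m ++ l)) :=
        List.IsChain.cons_cons hadj h1
      have k2 : (c :: (b :: m ++ l)).Nodup := List.nodup_cons.2 ⟨hcl, h2⟩
      by_cases hcB' : c ∈ B'
      · left
        refine ⟨c, b :: m ++ l, k1, k2, hcB', ?_, by simp⟩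
        intro x hx
        rcases List.mem_append.1 hx with h | h
        · exact h3 x h
        · exact hlB' x h
      · right
        refine ⟨b :: m, k1, k2, ?_⟩
        intro x hx
        rcases List.mem_cons.1 hx with rfl | h
        · exact hcB'
        · exact h3 x h

lemma main_aux {V : Type} [Finite V] (D : Dgraph V) (F : Set (Set V))
    (hF : ∀ B ∈ F, D.StronglyConnectedOn B)
    (hI : ∀ B ∈ F, ∀ B' ∈ F, (B ∩ B').Nonempty) (n : ℕ) :
    ∀ (v : V) (l : List V) (B : Set V), Nat.card V ≤ l.length + n → B ∈ F → v ∈ B →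
      List.IsChain (fun a b => D.Adj b a) (v :: l) → (v :: l).Nodup → (∀ x ∈ l, x ∉ B) →
      ∃ P : List V, D.IsPath P ∧ IsHittingSet F {v | v ∈ P} := by
  induction n with
  | zero =>
    intro v l B hcard _ _ _ hn _
    exfalso
    have := Fintype.ofFinite V
    have := hn.length_le_card
    rw [Nat.card_eq_fintype_card] at hcard
    simp at this
    omega
  | succ n ih =>
    intro v l B hcard hB hv hc hn hl
    by_cases hh : IsHittingSet F {x | x ∈ v :: l}
    · refine ⟨(v :: l).reverse, ⟨List.nodup_reverse.2 hn, ?_⟩, by simpa only [List.mem_reverse] using hh⟩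
      exact List.isChain_reverse.2 hc
    · simp only [IsHittingSet, not_forall] at hh
      obtain ⟨B', hB', hne⟩ := hh
      have hdis : ∀ x ∈ v :: l, x ∉ B' := fun x hx hxB => hne ⟨x, hx, hxB⟩
      obtain ⟨w, hwB, hwB'⟩ := hI B hB B' hB'
      rcases extend_aux D B B' v l hc hn (hdis v (by simp)) hl
        (fun x hx => hdis x (by simp [hx])) w (hF B hB v hv w hwB).2.2 with
        ⟨u, L, h1, h2, h3, h4, h5⟩ | ⟨m, _, _, h⟩
      · exact ih u L B' (by omega) hB' h3 h1 h2 h4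
      · exact absurd hwB' (h w (by simp))

end Dgraph

open Dgraph in
/-- if `T` is a `(k-1, k-1)`-linked set of size `2k - 1` in the finite
digraph `D`, then there is a directed path `P` in `D` whose vertex set is a hitting set
of the `T`-bramble `B_T`. -/
theorem stmt8 {V : Type} [Finite V] (D : Dgraph V) (k : ℕ) (hk : 1 ≤ k) (T : Set V)
    (hT : T.ncard = 2 * k - 1) (hlinked : D.IsLinked T (k - 1) (k - 1)) :
    ∃ P : List V, D.IsPath P ∧ IsHittingSet (D.TBramble T k) {v | v ∈ P} := by
  have hI : ∀ B ∈ D.TBramble T k, ∀ B' ∈ D.TBramble T k, (B ∩ B').Nonempty := by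
    rintro B ⟨_, hB⟩ B' ⟨_, hB'⟩
    by_contra hne
    have hd : Disjoint (B ∩ T) (B' ∩ T) := by
      rw [Set.disjoint_left]
      exact fun x hx hx' => hne ⟨x, hx.1, hx'.1⟩
    have h1 := Set.ncard_union_eq hd (Set.toFinite _) (Set.toFinite _)
    have h2 : (B ∩ T ∪ B' ∩ T).ncard ≤ T.ncard :=
      Set.ncard_le_ncard (Set.union_subset Set.inter_subset_right Set.inter_subset_right)
        (Set.toFinite _)
    omega
  by_cases hE : ∃ B, B ∈ D.TBramble T k
  · obtain ⟨B, hB⟩ := hE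
    obtain ⟨v, hv, -⟩ := hI B hB B hB
    exact main_aux D _ (fun B h => h.1) hI (Nat.card V) v [] B (by simp) hB hv
      (by simp) (by simp) (by simp)
  · exact ⟨[], ⟨by simp, List.isChain_nil⟩, fun B hB => absurd ⟨B, hB⟩ hE⟩
end

section
/- Let k ≥ 1, let g(k) = (k+1)(⌊k/2⌋+1) − 1, let D be a finite digraph, and let T be a (g(k)−1, g(k)−1)-linked set in D with |T| = 2g(k)−1. Then there exist in D a bramble B of order g(k), a directed path P whose vertex set is a hitting set of B, and a well-linked set A of order k with A ⊆ V(P). -/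
/-- `g(k) = (k+1)(⌊k/2⌋+1) - 1`. -/
def gfun (k : ℕ) : ℕ := (k + 1) * (k / 2 + 1) - 1

namespace Dgraph

theorem aux_iter_inj {V : Type} (f : V → V) (X Y : Set V)
    (hinj : ∀ u, u ∉ Y → ∀ v, v ∉ Y → f u = f v → u = v)
    (hX : ∀ u, u ∉ Y → f u ∉ X) :
    ∀ (i j : ℕ) (x x' : V), x ∈ X → x' ∈ X → (∀ a < i, f^[a] x ∉ Y) → (∀ a < j, f^[a] x' ∉ Y) →
      f^[i] x = f^[j] x' → x = x' ∧ i = j := by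
  intro i
  induction i with
  | zero =>
    intro j x x' hx hx' _ hj h
    cases j with
    | zero => exact ⟨h, rfl⟩
    | succ j =>
      exfalso
      rw [Function.iterate_succ_apply'] at h
      apply hX _ (hj j (Nat.lt_succ_self j))
      rw [← h]; exact hx
  | succ i ih =>
    intro j x x' hx hx' hi hj h
    cases j with
    | zero =>
      exfalso
      rw [Function.iterate_succ_apply'] at h
      apply hX _ (hi i (Nat.lt_succ_self i))
      rw [h]; exact hx'
    | succ j =>
      rw [Function.iterate_succ_apply', Function.iterate_succ_apply'] at h
      have h' := hinj _ (hi i (Nat.lt_succ_self i)) _ (hj j (Nat.lt_succ_self j)) h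
      obtain ⟨h1, h2⟩ := ih j x x' hx hx' (fun a ha => hi a (by omega)) (fun a ha => hj a (by omega)) h'
      exact ⟨h1, by omega⟩

/-- Disjoint paths from a "next vertex" function. -/
theorem aux_paths_of_fun {V : Type} [Finite V] (D : Dgraph V) (f : V → V) (X Y : Set V)
    (hinj : ∀ u, u ∉ Y → ∀ v, v ∉ Y → f u = f v → u = v)
    (hX : ∀ u, u ∉ Y → f u ∉ X)
    (hadj : ∀ u, u ∉ Y → f u = u ∨ D.Adj u (f u)) :
    D.HasDisjointPaths X Y X.ncard := by
  classical
  have hex : ∀ x : X, ∃ n, f^[n] x.1 ∈ Y := by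
    intro x
    by_contra hcon
    push Not at hcon
    obtain ⟨i, j, hij, he⟩ := Finite.exists_ne_map_eq_of_infinite (fun n : ℕ => f^[n] x.1)
    exact hij (aux_iter_inj f X Y hinj hX i j x x x.2 x.2 (fun a _ => hcon a)
      (fun a _ => hcon a) he).2
  let N : X → ℕ := fun x => Nat.find (hex x)
  have hN : ∀ x, f^[N x] x.1 ∈ Y := fun x => Nat.find_spec (hex x)
  have hN' : ∀ x, ∀ a < N x, f^[a] x.1 ∉ Y := fun x a ha => Nat.find_min (hex x) ha
  have key : ∀ (x x' : X) (i j : ℕ), i ≤ N x → j ≤ N x' → f^[i] x.1 = f^[j] x'.1 →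
      x.1 = x'.1 ∧ i = j := fun x x' i j hi hj h =>
    aux_iter_inj f X Y hinj hX i j x x' x.2 x'.2 (fun a ha => hN' x a (by omega))
      (fun a ha => hN' x' a (by omega)) h
  have hc : Nat.card X = X.ncard := rfl
  let e : Fin X.ncard ≃ X := (Finite.equivFinOfCardEq hc).symm
  refine ⟨fun i => (List.range (N (e i) + 1)).map (fun a => f^[a] (e i).1), ?_, ?_⟩
  · intro i
    refine ⟨⟨?_, ?_⟩, ?_, ?_, ?_⟩
    · refine List.Nodup.map_on ?_ List.nodup_range
      intro a ha b hb h
      rw [List.mem_range] at ha hb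
      exact (key _ _ a b (by omega) (by omega) h).2
    · show List.IsChain _ _
      rw [List.isChain_iff_getElem]
      intro a ha
      simp only [List.length_map, List.length_range] at ha
      simp only [List.getElem_map, List.getElem_range]
      rcases hadj (f^[a] (e i).1) (hN' _ a (by omega)) with h | h
      · exfalso
        rw [← Function.iterate_succ_apply' f] at h
        have := (key _ _ (a+1) a (by omega) (by omega) h).2
        omega
      · rwa [Function.iterate_succ_apply']
    · simp
    · simp [List.head_map, List.head_range]
    · rw [List.getLast_map, List.getLast_range]
      simpa using hN (e i)
  · intro i j hij v hv hv'
    simp only [List.mem_map, List.mem_range] at hv hv'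
    obtain ⟨a, ha, rfl⟩ := hv
    obtain ⟨b, hb, h⟩ := hv'
    have := (key _ _ b a (by omega) (by omega) h).1
    exact hij (e.injective (Subtype.ext this)).symm

theorem aux_menger {V : Type} [Finite V] (D : Dgraph V) (X Y : Set V)
    (h : ∀ S : Set V, S.ncard < X.ncard → ∃ x ∈ X, ∃ y ∈ Y, D.ReachIn Sᶜ x y) :
    D.HasDisjointPaths X Y X.ncard := by
  classical
  haveI := Fintype.ofFinite V
  let t : {u : V // u ∉ Y} → Finset V := fun u =>
    Finset.univ.filter (fun v => v ∉ X ∧ (v = u.1 ∨ D.Adj u.1 v))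
  have hall : ∀ s : Finset {u : V // u ∉ Y}, s.card ≤ (s.biUnion t).card := by
    intro s
    by_contra hcon
    push Not at hcon
    let W : Set V := {v | ∃ hv : v ∉ Y, (⟨v, hv⟩ : {u : V // u ∉ Y}) ∈ s}
    have hWc : W.ncard = s.card := by
      have : W = ((s.image Subtype.val : Finset V) : Set V) := by
        ext v; simp [W]
      rw [this, Set.ncard_coe_finset, Finset.card_image_of_injective _ Subtype.val_injective]
    let M : Set V := {v | v ∉ X ∧ ∃ u ∈ W, v = u ∨ D.Adj u v}
    have hMc : M.ncard = (s.biUnion t).card := by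
      have : M = ((s.biUnion t : Finset V) : Set V) := by
        ext v; simp [M, W, t]
      rw [this, Set.ncard_coe_finset]
    have hMW : M.ncard < W.ncard := by omega
    have h1 : (M \ W).ncard + (W \ X).ncard = M.ncard := by
      have hsub : W \ X ⊆ M := fun v hv => ⟨hv.2, v, hv.1, Or.inl rfl⟩
      have : M \ W = M \ (W \ X) := by
        ext v; simp only [Set.mem_diff]
        constructor
        · rintro ⟨a, b⟩; exact ⟨a, fun c => b c.1⟩
        · rintro ⟨a, b⟩; exact ⟨a, fun c => b ⟨c, a.1⟩⟩
      rw [this]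
      exact Set.ncard_sdiff_add_ncard_of_subset hsub
    have h2 : (W ∩ X).ncard + (W \ X).ncard = W.ncard := Set.ncard_inter_add_ncard_sdiff_eq_ncard W X
    have h3 : (X ∩ W).ncard + (X \ W).ncard = X.ncard := Set.ncard_inter_add_ncard_sdiff_eq_ncard X W
    rw [Set.inter_comm] at h3
    let S : Set V := (X \ W) ∪ (M \ W)
    have hS : S.ncard ≤ (X \ W).ncard + (M \ W).ncard := Set.ncard_union_le _ _
    obtain ⟨x, hx, y, hy, hxS, hyS, hr⟩ := h S (by omega)
    have hxW : x ∈ W := by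
      by_contra hxW; exact hxS (Or.inl ⟨hx, hxW⟩)
    have : y ∈ W := by
      clear hy
      clear hyS
      induction hr with
      | refl => exact hxW
      | @tail b c hab hbc ih =>
        obtain ⟨_, hcS, hadj⟩ := hbc
        by_contra hcW
        by_cases hcX : c ∈ X
        · exact hcS (Or.inl ⟨hcX, hcW⟩)
        · exact hcS (Or.inr ⟨⟨hcX, b, ih, Or.inr hadj⟩, hcW⟩)
    exact this.1 hy
  obtain ⟨f, hfi, hf⟩ := (Finset.all_card_le_biUnion_card_iff_exists_injective t).1 hall
  refine aux_paths_of_fun D (fun u => if hu : u ∉ Y then f ⟨u, hu⟩ else u) X Y ?_ ?_ ?_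
  · intro u hu v hv huv
    simp only [hu, hv, not_false_eq_true, dite_true] at huv
    simpa using hfi huv
  · intro u hu
    simp only [hu, not_false_eq_true, dite_true]
    have := hf ⟨u, hu⟩
    simp only [t, Finset.mem_filter] at this
    exact this.2.1
  · intro u hu
    simp only [hu, not_false_eq_true, dite_true]
    have := hf ⟨u, hu⟩
    simp only [t, Finset.mem_filter] at this
    exact this.2.2

theorem aux_path_of_rtg {V : Type} (R : V → V → Prop) (a b : V) (h : Relation.ReflTransGen R a b) :
    a ≠ b → ∃ l : List V, (a :: l ++ [b]).Nodup ∧ List.IsChain R (a :: l ++ [b]) ∧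
      ∀ x ∈ a :: l, ∃ y, R x y := by
  classical
  induction h using Relation.ReflTransGen.head_induction_on with
  | refl => intro h; exact absurd rfl h
  | @head a c hac hcb ih =>
    intro hab
    by_cases hc : c = b
    · subst hc
      refine ⟨[], by simp [hab], by simp [hac], ?_⟩
      intro x hx
      simp at hx
      subst hx
      exact ⟨_, hac⟩
    · obtain ⟨l, hn, hch, hs⟩ := ih hc
      by_cases ha : a ∈ c :: l
      · obtain ⟨s, t, hst⟩ := List.append_of_mem ha
        rw [hst] at hn hch hs
        rw [List.append_assoc] at hn hch
        refine ⟨t, (List.nodup_append.1 hn).2.1, (List.isChain_append.1 hch).2.1, ?_⟩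
        intro x hx
        exact hs x (by simp at hx ⊢; tauto)
      · refine ⟨c :: l, ?_, ?_, ?_⟩
        · rw [List.cons_append, List.nodup_cons]
          refine ⟨?_, hn⟩
          rw [List.mem_append]
          rintro (h | h)
          · exact ha h
          · simp at h; exact hab h
        · simp only [List.cons_append] at hch ⊢
          exact List.isChain_cons_cons.2 ⟨hac, hch⟩
        · intro x hx
          rcases List.mem_cons.1 hx with rfl | hx
          · exact ⟨_, hac⟩
          · exact hs x hx

theorem aux_reach_mono {V : Type} (D : Dgraph V) {S S' : Set V} (hS : S ⊆ S') {u v : V}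
    (h : D.ReachIn S u v) : D.ReachIn S' u v :=
  ⟨hS h.1, hS h.2.1, Relation.ReflTransGen.mono (fun _ _ hab => ⟨hS hab.1, hS hab.2.1, hab.2.2⟩) _ _ h.2.2⟩

theorem aux_reach_trans {V : Type} (D : Dgraph V) {S : Set V} {u v w : V}
    (h : D.ReachIn S u v) (h' : D.ReachIn S v w) : D.ReachIn S u w :=
  ⟨h.1, h'.2.1, h.2.2.trans h'.2.2⟩

theorem aux_touch {V : Type} (D : Dgraph V) (ℬ : Set (Set V)) (hb : D.IsBramble ℬ)
    (B B' : Set V) (hB : B ∈ ℬ) (hB' : B' ∈ ℬ) (u v : V) (hu : u ∈ B) (hv : v ∈ B') :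
    D.ReachIn (B ∪ B') u v := by
  have m1 : B ⊆ B ∪ B' := Set.subset_union_left
  have m2 : B' ⊆ B ∪ B' := Set.subset_union_right
  rcases hb.2 B hB B' hB' with ⟨x, hx, hx'⟩ | ⟨⟨x, hx, y, hy, hxy⟩, _⟩
  · exact aux_reach_trans D (aux_reach_mono D m1 (hb.1 B hB u hu x hx))
      (aux_reach_mono D m2 (hb.1 B' hB' x hx' v hv))
  · refine aux_reach_trans D (aux_reach_mono D m1 (hb.1 B hB u hu x hx))
      (aux_reach_trans D ?_ (aux_reach_mono D m2 (hb.1 B' hB' y hy v hv)))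
    exact ⟨m1 hx, m2 hy, Relation.ReflTransGen.single ⟨m1 hx, m2 hy, hxy⟩⟩

theorem aux_hitting_path {V : Type} [Finite V] (D : Dgraph V) (ℬ : Set (Set V))
    (hb : D.IsBramble ℬ) (hne : ∀ B ∈ ℬ, B.Nonempty) (hℬ : ℬ.Nonempty) :
    ∃ P : List V, D.IsPath P ∧ IsHittingSet ℬ {v | v ∈ P} := by
  classical
  by_contra hcon
  push Not at hcon
  have main : ∀ n : ℕ, ∃ (P : List V) (w : V) (B : Set V), n ≤ P.length ∧ D.IsPath (P ++ [w]) ∧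
      B ∈ ℬ ∧ w ∈ B ∧ ∀ x ∈ P, x ∉ B := by
    intro n
    induction n with
    | zero =>
      obtain ⟨B, hB⟩ := hℬ
      obtain ⟨w, hw⟩ := hne B hB
      exact ⟨[], w, B, by simp, ⟨by simp, List.isChain_singleton w⟩, hB, hw, by simp⟩
    | succ n ih =>
      obtain ⟨P, w, B, hn, hP, hB, hw, hd⟩ := ih
      have := hcon _ hP
      unfold IsHittingSet at this
      push Not at this
      obtain ⟨B', hB', hemp⟩ := this
      have hemp' : ∀ x ∈ P ++ [w], x ∉ B' := by
        intro x hx hxB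
        have : x ∈ ({v | v ∈ P ++ [w]} ∩ B' : Set V) := ⟨hx, hxB⟩
        rw [hemp] at this
        exact this
      have hwB' : w ∉ B' := hemp' w (by simp)
      obtain ⟨v0, hv0⟩ := hne B' hB'
      have hreach := (aux_touch D ℬ hb B B' hB hB' w v0 hw hv0).2.2
      let R : V → V → Prop := fun a b => (a ∈ B ∧ a ∉ B') ∧ D.Adj a b
      have hR : ∀ a, Relation.ReflTransGen (fun a b => a ∈ B ∪ B' ∧ b ∈ B ∪ B' ∧ D.Adj a b) a v0 →
          ∃ v ∈ B', Relation.ReflTransGen R a v := by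
        intro a h
        induction h using Relation.ReflTransGen.head_induction_on with
        | refl => exact ⟨v0, hv0, Relation.ReflTransGen.refl⟩
        | @head a c hac hcb ih =>
          by_cases ha : a ∈ B'
          · exact ⟨a, ha, Relation.ReflTransGen.refl⟩
          · obtain ⟨v, hv, hr⟩ := ih
            refine ⟨v, hv, Relation.ReflTransGen.head ⟨⟨?_, ha⟩, hac.2.2⟩ hr⟩
            exact hac.1.resolve_right ha
      obtain ⟨v, hv, hr⟩ := hR w hreach
      obtain ⟨l, hnd, hch, hs⟩ := aux_path_of_rtg R w v hr (fun h => hwB' (h ▸ hv))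
      refine ⟨P ++ w :: l, v, B', ?_, ⟨?_, ?_⟩, hB', hv, ?_⟩
      · simp; omega
      · rw [List.append_assoc]
        refine List.nodup_append.2 ⟨(List.nodup_append.1 hP.1).1, hnd, ?_⟩
        intro a ha b hb hab
        subst hab
        rcases List.mem_append.1 hb with h | h
        · obtain ⟨y, hy⟩ := hs a h
          exact hd a ha hy.1.1
        · simp at h
          subst h
          exact hemp' a (by simp [ha]) hv
      · show List.IsChain _ _
        rw [List.append_assoc, List.cons_append]
        refine List.isChain_split.2 ⟨hP.2, ?_⟩
        exact hch.imp (fun a b hab => hab.2)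
      · intro x hx
        rcases List.mem_append.1 hx with h | h
        · exact hemp' x (by simp [h])
        · obtain ⟨y, hy⟩ := hs x h
          exact hy.1.2
  haveI := Fintype.ofFinite V
  obtain ⟨P, w, B, hn, hP, _⟩ := main (Fintype.card V)
  have := hP.1.length_le_card
  simp at this
  omega

/-- Every hitting set of the family has at least `n` elements. -/
def AuxBig {V : Type} (ℱ : Set (Set V)) (n : ℕ) : Prop :=
  ∀ C : Set V, IsHittingSet ℱ C → n ≤ C.ncard

theorem aux_split {V : Type} [Finite V] (ℬ : Set (Set V)) (p : ℕ → V) (L h : ℕ) (hh : 1 ≤ h)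
    (hit : ∀ B ∈ ℬ, ∃ i < L, p i ∈ B) :
    ∀ (m s : ℕ), AuxBig {B ∈ ℬ | ∀ i < s, p i ∉ B} (m * (h + 1) + h) →
      ∃ σ : ℕ → ℕ, σ 0 = s ∧ (∀ i ≤ m, σ i < σ (i + 1)) ∧ (∀ i ≤ m, σ i ≤ L) ∧
        σ (m + 1) = L + 1 ∧
        ∀ i ≤ m, AuxBig {B ∈ ℬ | ∃ j, σ i ≤ j ∧ j + 1 < σ (i + 1) ∧ p j ∈ B} h := by
  classical
  have hlt : ∀ s n, 1 ≤ n → AuxBig {B ∈ ℬ | ∀ i < s, p i ∉ B} n → s < L := by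
    intro s n hn hbig
    by_contra hsL
    have := hbig ∅ (by
      rintro B ⟨hB, hB'⟩
      obtain ⟨i, hi, hiB⟩ := hit B hB
      exact absurd hiB (hB' i (by omega)))
    simp at this
    omega
  intro m
  induction m with
  | zero =>
    intro s hbig
    have hs := hlt s _ (by omega) hbig
    refine ⟨fun i => if i = 0 then s else L + 1, by simp, ?_, ?_, by simp, ?_⟩
    · intro i hi
      obtain rfl : i = 0 := by omega
      simp; omega
    · intro i hi
      obtain rfl : i = 0 := by omega
      simp; omega
    · intro i hi
      obtain rfl : i = 0 := by omega
      intro C hC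
      have := hbig C (by
        rintro B ⟨hB, hB'⟩
        obtain ⟨i, hi, hiB⟩ := hit B hB
        refine hC B ⟨hB, i, ?_, ?_, hiB⟩
        · by_contra hlt
          simp at hlt
          exact hB' i hlt hiB
        · simpa using hi)
      omega
  | succ m ih =>
    intro s hbig
    have hs := hlt s _ (by omega) hbig
    have hex : ∃ e, AuxBig {B ∈ ℬ | ∃ j, s ≤ j ∧ j < e ∧ p j ∈ B} h := by
      refine ⟨L, fun C hC => ?_⟩
      have := hbig C (by
        rintro B ⟨hB, hB'⟩
        obtain ⟨i, hi, hiB⟩ := hit B hB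
        refine hC B ⟨hB, i, ?_, hi, hiB⟩
        by_contra hlt
        exact hB' i (by omega) hiB)
      omega
    obtain ⟨e, he, hemin⟩ : ∃ e, AuxBig {B ∈ ℬ | ∃ j, s ≤ j ∧ j < e ∧ p j ∈ B} h ∧
        ∀ e' < e, ¬ AuxBig {B ∈ ℬ | ∃ j, s ≤ j ∧ j < e' ∧ p j ∈ B} h :=
      ⟨Nat.find hex, Nat.find_spec hex, fun e' he' => Nat.find_min hex he'⟩
    have hse : s < e := by
      by_contra hcon
      have := he ∅ (by
        rintro B ⟨hB, j, h1, h2, _⟩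
        omega)
      simp at this
      omega
    have hnot := hemin (e - 1) (by omega)
    unfold AuxBig at hnot
    push Not at hnot
    obtain ⟨C₀, hC₀, hC₀c⟩ := hnot
    have hnext : AuxBig {B ∈ ℬ | ∀ i < e + 1, p i ∉ B} (m * (h + 1) + h) := by
      intro C hC
      have h1 := hbig (C ∪ (C₀ ∪ {p (e - 1), p e})) (by
        rintro B ⟨hB, hB'⟩
        by_cases hp1 : p (e - 1) ∈ B
        · exact ⟨p (e - 1), by simp, hp1⟩
        by_cases hp2 : p e ∈ B
        · exact ⟨p e, by simp, hp2⟩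
        by_cases hj : ∃ j, s ≤ j ∧ j < e - 1 ∧ p j ∈ B
        · obtain ⟨x, hx, hxB⟩ := hC₀ B ⟨hB, hj⟩
          exact ⟨x, Or.inr (Or.inl hx), hxB⟩
        · obtain ⟨x, hx, hxB⟩ := hC B ⟨hB, by
            intro i hi hiB
            push Not at hj
            rcases Nat.lt_or_ge i s with h1 | h1
            · exact hB' i h1 hiB
            rcases Nat.lt_or_ge i (e - 1) with h2 | h2
            · exact hj i h1 h2 hiB
            · obtain rfl | rfl : i = e - 1 ∨ i = e := by omega
              · exact hp1 hiB
              · exact hp2 hiB⟩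
          exact ⟨x, Or.inl hx, hxB⟩)
      have h2 := Set.ncard_union_le C (C₀ ∪ {p (e - 1), p e})
      have h3 := Set.ncard_union_le C₀ {p (e - 1), p e}
      have h4 := Set.ncard_insert_le (p (e - 1)) {p e}
      rw [Set.ncard_singleton] at h4
      have h5 : (m + 1) * (h + 1) = m * (h + 1) + h + 1 := by ring
      omega
    obtain ⟨σ, h0, h1, h2, h3, h4⟩ := ih (e + 1) hnext
    refine ⟨fun i => Nat.casesOn i s σ, rfl, ?_, ?_, h3, ?_⟩
    · intro i hi
      cases i with
      | zero => show s < σ 0; omega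
      | succ i => exact h1 i (by omega)
    · intro i hi
      cases i with
      | zero => exact hs.le
      | succ i => exact h2 i (by omega)
    · intro i hi
      cases i with
      | zero =>
        intro C hC
        apply he C
        rintro B ⟨hB, j, hj1, hj2, hjB⟩
        exact hC B ⟨hB, j, hj1, by show j + 1 < σ 0; omega, hjB⟩
      | succ i => exact h4 i (by omega)

theorem aux_seg_reach {V : Type} (D : Dgraph V) (p : ℕ → V) (S : Set V) (i j : ℕ) (hij : i ≤ j)
    (hS : ∀ a, i ≤ a → a ≤ j → p a ∈ S) (hadj : ∀ a, i ≤ a → a < j → D.Adj (p a) (p (a + 1))) :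
    D.ReachIn S (p i) (p j) := by
  induction j, hij using Nat.le_induction with
  | base => exact ⟨hS i le_rfl le_rfl, hS i le_rfl le_rfl, Relation.ReflTransGen.refl⟩
  | succ j hij ih =>
    refine aux_reach_trans D (ih (fun a h1 h2 => hS a h1 (by omega))
      (fun a h1 h2 => hadj a h1 (by omega))) ?_
    have h1 := hS j hij (by omega)
    have h2 := hS (j + 1) (by omega) le_rfl
    exact ⟨h1, h2, Relation.ReflTransGen.single ⟨h1, h2, hadj j hij (by omega)⟩⟩

theorem aux_pigeon {V : Type} [Finite V] (X S : Set V) (hlt : S.ncard < X.ncard)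
    (Q : V → V → Prop) (hQ : ∀ x ∈ X, ∀ x' ∈ X, ∀ v, Q x v → Q x' v → x = x') :
    ∃ x ∈ X, ∀ v, Q x v → v ∉ S := by
  by_contra hcon
  push Not at hcon
  choose! F hF1 hF2 using hcon
  have := Set.ncard_le_ncard_of_injOn F hF2 (fun x hx x' hx' h =>
    hQ x hx x' hx' (F x) (hF1 x hx) (h ▸ hF1 x' hx'))
  omega

theorem aux_wl {V : Type} [Finite V] (D : Dgraph V) (ℬ : Set (Set V)) (hb : D.IsBramble ℬ)
    (p : ℕ → V) (L h k : ℕ) (hinj : ∀ i < L, ∀ j < L, p i = p j → i = j)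
    (hadj : ∀ i, i + 1 < L → D.Adj (p i) (p (i + 1))) (hkh : k / 2 ≤ h)
    (σ : ℕ → ℕ) (hσ : ∀ i ≤ k, σ i < σ (i + 1)) (hσL : ∀ i ≤ k, σ i ≤ L) (hσk : σ (k + 1) = L + 1)
    (hbig : ∀ i ≤ k, AuxBig {B ∈ ℬ | ∃ j, σ i ≤ j ∧ j + 1 < σ (i + 1) ∧ p j ∈ B} h) :
    ∃ A : Set V, D.WellLinked A ∧ A.ncard = k ∧ ∀ a ∈ A, ∃ i < L, p i = a := by
  classical
  have hmono : ∀ i j, i ≤ j → j ≤ k + 1 → σ i ≤ σ j := by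
    intro i j hij
    induction j, hij using Nat.le_induction with
    | base => intro _; exact le_rfl
    | succ j hij ih => intro hj; have := ih (by omega); have := hσ j (by omega); omega
  have hle1 : ∀ i ≤ k + 1, σ i ≤ L + 1 := fun i hi => hσk ▸ hmono i (k + 1) hi le_rfl
  -- uniqueness of segments
  have huniq : ∀ i i', i ≤ k → i' ≤ k → ∀ j, σ i ≤ j → j < σ (i + 1) → σ i' ≤ j → j < σ (i' + 1) →
      i = i' := by
    intro i i' hi hi' j h1 h2 h3 h4
    by_contra hne
    rcases Nat.lt_or_gt_of_ne hne with h | h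
    · have := hmono (i + 1) i' h (by omega); omega
    · have := hmono (i' + 1) i h (by omega); omega
  let a : ℕ → V := fun i => p (σ (i + 1) - 1)
  have hpos : ∀ i, i < k → 1 ≤ σ (i + 1) ∧ σ (i + 1) - 1 < L := by
    intro i hi
    have := hσ i (by omega)
    have := hσL (i + 1) (by omega)
    omega
  have hainj : ∀ i < k, ∀ j < k, a i = a j → i = j := by
    intro i hi j hj h
    have h1 := hpos i hi
    have h2 := hpos j hj
    have h3 := hinj _ h1.2 _ h2.2 h
    have := hσ i (by omega)
    have := hσ j (by omega)
    exact huniq i j (by omega) (by omega) (σ (i + 1) - 1) (by omega) (by omega) (by omega) (by omega)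
  let A : Set V := a '' (Set.Iio k)
  have hAc : A.ncard = k := by
    have hio : Set.InjOn a (Set.Iio k) := fun i hi j hj h => hainj i hi j hj h
    have := hio.ncard_image
    rw [this]
    simp
  refine ⟨A, ?_, hAc, ?_⟩
  · intro X Y hXA hYA hdis hcard
    apply aux_menger
    intro S hS
    have hle : X.ncard + Y.ncard ≤ k := by
      rw [← Set.ncard_union_eq hdis, ← hAc]
      exact Set.ncard_le_ncard (Set.union_subset hXA hYA)
    have hSh : S.ncard < h := by omega
    -- choose the element of X
    obtain ⟨x, hx, hxQ⟩ := aux_pigeon X S hS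
      (fun x v => ∃ i < k, x = a i ∧ ∃ j, σ (i + 1) ≤ j + 1 ∧ j + 1 < σ (i + 2) ∧ v = p j) (by
        rintro x _ x' _ v ⟨i, hi, rfl, j, h1, h2, rfl⟩ ⟨i', hi', rfl, j', h1', h2', h3⟩
        have := hle1 (i + 2) (by omega)
        have := hle1 (i' + 2) (by omega)
        have := hinj j (by omega) j' (by omega) h3
        subst this
        have := huniq (i + 1) (i' + 1) (by omega) (by omega) (j + 1) h1 h2 h1' h2'
        rw [Nat.succ.inj this])
    obtain ⟨y, hy, hyQ⟩ := aux_pigeon Y S (by omega)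
      (fun x v => ∃ i < k, x = a i ∧ ∃ j, σ i ≤ j ∧ j < σ (i + 1) ∧ v = p j) (by
        rintro x _ x' _ v ⟨i, hi, rfl, j, h1, h2, rfl⟩ ⟨i', hi', rfl, j', h1', h2', h3⟩
        have := hσL (i + 1) (by omega)
        have := hσL (i' + 1) (by omega)
        have := hinj j (by omega) j' (by omega) h3
        subst this
        rw [huniq i i' (by omega) (by omega) j h1 h2 h1' h2'])
    refine ⟨x, hx, y, hy, ?_⟩
    obtain ⟨i, hi, rfl⟩ := hXA hx
    obtain ⟨i', hi', rfl⟩ := hYA hy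
    simp only [Set.mem_Iio] at hi hi'
    have hav : ∀ t ≤ k, ∃ B ∈ ℬ, (∃ j, σ t ≤ j ∧ j + 1 < σ (t + 1) ∧ p j ∈ B) ∧ B ⊆ Sᶜ := by
      intro t ht
      by_contra hcon
      push Not at hcon
      have := hbig t ht S (by
        rintro B ⟨hB, hj⟩
        have := hcon B hB hj
        rw [Set.not_subset] at this
        obtain ⟨z, hz, hz'⟩ := this
        exact ⟨z, by simpa using hz', hz⟩)
      omega
    obtain ⟨B, hB, ⟨j, hj1, hj2, hjB⟩, hBS⟩ := hav (i + 1) (by omega)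
    obtain ⟨B', hB', ⟨j', hj1', hj2', hjB'⟩, hBS'⟩ := hav i' (by omega)
    have := hle1 (i + 2) (by omega)
    have := hσL (i' + 1) (by omega)
    have := hpos i hi
    have hj2 : j + 1 < σ (i + 2) := hj2
    refine aux_reach_trans D (v := p j) ?_ (aux_reach_trans D (v := p j') ?_ ?_)
    · refine aux_seg_reach D p _ _ _ (by omega) ?_ ?_
      · intro b hb1 hb2
        exact hxQ _ ⟨i, hi, rfl, b, by omega, by omega, rfl⟩
      · intro b hb1 hb2
        exact hadj b (by omega)
    · exact aux_reach_mono D (Set.union_subset hBS hBS')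
        (aux_touch D ℬ hb B B' hB hB' _ _ hjB hjB')
    · refine aux_seg_reach D p _ _ _ (by omega) ?_ ?_
      · intro b hb1 hb2
        exact hyQ _ ⟨i', hi', rfl, b, by omega, by omega, rfl⟩
      · intro b hb1 hb2
        exact hadj b (by omega)
  · rintro _ ⟨i, hi, rfl⟩
    exact ⟨_, (hpos i hi).2, rfl⟩

end Dgraph

open Dgraph in
/-- with `g(k) = (k+1)(⌊k/2⌋+1) - 1`, if `T` is a `(g(k)-1, g(k)-1)`-linked
set of size `2g(k) - 1` in the finite digraph `D`, then `D` contains a bramble `ℬ` of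
order `g(k)`, a directed path `P` whose vertex set is a hitting set of `ℬ`, and a
well-linked set `A` of order `k` with `A ⊆ V(P)`. -/
theorem stmt14 {V : Type} [Finite V] (D : Dgraph V) (k : ℕ) (hk : 1 ≤ k) (T : Set V)
    (hT : T.ncard = 2 * gfun k - 1)
    (hlinked : D.IsLinked T (gfun k - 1) (gfun k - 1)) :
    ∃ (ℬ : Set (Set V)) (P : List V) (A : Set V),
      D.IsBramble ℬ ∧ brambleOrder ℬ = gfun k ∧
      D.IsPath P ∧ IsHittingSet ℬ {v | v ∈ P} ∧
      D.WellLinked A ∧ A.ncard = k ∧ A ⊆ {v | v ∈ P} := by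
  classical
  obtain ⟨g, hg⟩ : ∃ g, g = gfun k := ⟨_, rfl⟩
  have hg1 : g = k * (k / 2 + 1) + k / 2 := by
    rw [hg]; unfold gfun
    have : (k + 1) * (k / 2 + 1) = k * (k / 2 + 1) + k / 2 + 1 := by ring
    omega
  have hgpos : 1 ≤ g := by
    rw [hg1]
    have : 1 ≤ k * (k / 2 + 1) := Nat.mul_pos hk (by omega)
    omega
  rw [← hg] at hT hlinked ⊢
  let ℬ := D.TBramble T g
  have hinter : ∀ B C : Set V, g ≤ (B ∩ T).ncard → g ≤ (C ∩ T).ncard →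
      ((C ∩ T) ∩ (B ∩ T)).Nonempty := by
    intro B C h1 h2
    by_contra hcon
    rw [Set.not_nonempty_iff_eq_empty] at hcon
    have h3 := Set.ncard_union_eq (Set.disjoint_iff_inter_eq_empty.2 hcon)
    have h4 : ((C ∩ T) ∪ (B ∩ T)).ncard ≤ T.ncard :=
      Set.ncard_le_ncard (Set.union_subset Set.inter_subset_right Set.inter_subset_right)
    omega
  have hb : D.IsBramble ℬ := by
    refine ⟨fun B hB => hB.1, fun B hB B' hB' => Or.inl ?_⟩
    obtain ⟨x, hx, hx'⟩ := hinter B' B hB'.2 hB.2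
    exact ⟨x, hx.1, hx'.1⟩
  have hbig : AuxBig ℬ g := by
    intro C hC
    by_contra hlt
    have hnb : ¬ D.IsBalancedSeparator T (g - 1) C := by
      intro hbal
      have := hlinked C hbal
      omega
    unfold IsBalancedSeparator at hnb
    push Not at hnb
    obtain ⟨K, hK, hKc⟩ := hnb
    obtain ⟨x, hx, hx'⟩ := hC K ⟨hK.2.1, by omega⟩
    exact hK.1 hx' hx
  have hne : ∀ B ∈ ℬ, B.Nonempty := by
    intro B hB
    have := hB.2
    have h2 : 0 < (B ∩ T).ncard := by omega
    rw [Set.ncard_pos] at h2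
    exact h2.mono Set.inter_subset_left
  have hord : brambleOrder ℬ = g := by
    obtain ⟨C, hCT, hCc⟩ := Set.exists_subset_card_eq (s := T) (n := g) (by omega)
    apply le_antisymm
    · apply Nat.sInf_le
      refine ⟨C, ?_, hCc⟩
      intro B hB
      have hCT' : C ∩ T = C := Set.inter_eq_left.2 hCT
      obtain ⟨x, hx, hx'⟩ := hinter B C hB.2 (by rw [hCT', hCc])
      exact ⟨x, hx.1, hx'.1⟩
    · apply le_csInf
      · refine ⟨_, Set.univ, ?_, rfl⟩
        intro B hB
        rw [Set.univ_inter]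
        exact hne B hB
      · rintro n ⟨C, hC, rfl⟩
        exact hbig C hC
  have hℬ : ℬ.Nonempty := by
    by_contra hcon
    rw [Set.not_nonempty_iff_eq_empty] at hcon
    have := hbig ∅ (by intro B hB; rw [hcon] at hB; exact absurd hB (Set.notMem_empty B))
    simp at this
    omega
  obtain ⟨P, hP, hPhit⟩ := aux_hitting_path D ℬ hb hne hℬ
  suffices h : ∃ A : Set V, D.WellLinked A ∧ A.ncard = k ∧ A ⊆ {v | v ∈ P} by
    obtain ⟨A, hA⟩ := h
    exact ⟨ℬ, P, A, hb, hord, hP, hPhit, hA⟩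
  obtain ⟨B₀, hB₀⟩ := hℬ
  obtain ⟨v₀, hv₀, _⟩ := hPhit B₀ hB₀
  by_cases hk1 : k = 1
  · subst hk1
    refine ⟨{v₀}, ?_, by simp, by simpa using hv₀⟩
    intro X Y hX hY hdis hc
    apply aux_menger
    intro S hS
    have h1 : X.ncard + Y.ncard ≤ ({v₀} : Set V).ncard := by
      rw [← Set.ncard_union_eq hdis]
      exact Set.ncard_le_ncard (Set.union_subset hX hY)
    rw [Set.ncard_singleton] at h1
    omega
  · let p : ℕ → V := fun i => P.getD i v₀
    have hp : ∀ i (hi : i < P.length), p i = P[i] := fun i hi => by simp [p, hi]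
    have hit : ∀ B ∈ ℬ, ∃ i < P.length, p i ∈ B := by
      intro B hB
      obtain ⟨x, hx, hxB⟩ := hPhit B hB
      obtain ⟨i, hi, rfl⟩ := List.mem_iff_getElem.1 hx
      exact ⟨i, hi, by rw [hp i hi]; exact hxB⟩
    obtain ⟨σ, _, h1, h2, h3, h4⟩ := aux_split ℬ p P.length (k / 2) (by omega) hit k 0 (by
      intro C hC
      rw [← hg1]
      exact hbig C (fun B hB => hC B ⟨hB, by simp⟩))
    obtain ⟨A, hA1, hA2, hA3⟩ := aux_wl D ℬ hb p P.length (k / 2) k (by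
      intro i hi j hj h
      rw [hp i hi, hp j hj] at h
      exact (hP.1.getElem_inj_iff).1 h) (by
      intro i hi
      rw [hp i (by omega), hp (i + 1) hi]
      exact List.isChain_iff_getElem.1 hP.2 i hi) le_rfl σ h1 h2 h3 h4
    refine ⟨A, hA1, hA2, ?_⟩
    intro a ha
    obtain ⟨i, hi, rfl⟩ := hA3 a ha
    rw [hp i hi]
    exact List.getElem_mem hi
end

section
/- Let D be a finite digraph, let ℓ, p ≥ 1 be integers, let P be a directed path in D, and let A ⊆ V(P) be a well-linked set in D with |A| = 2ℓp. Then D contains an ℓ-linked path system of order p. -/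
theorem aux_split {V : Type} [Finite V] (P : List V) : ∀ (A : Set V) (k : ℕ), A ⊆ {v | v ∈ P} → k ≤ A.ncard →
    ∃ (l1 l2 : List V) (B : Set V), P = l1 ++ l2 ∧ B ⊆ A ∧ B ⊆ {v | v ∈ l1} ∧
      A \ B ⊆ {v | v ∈ l2} ∧ B.ncard = k := by
  induction P using List.reverseRecOn with
  | nil =>
    intro A k hA hk
    have h0 : A = ∅ := by
      ext v; constructor
      · intro h; have := hA h; simp at this
      · simp
    subst h0
    simp at hk
    exact ⟨[], [], ∅, rfl, by simp, by simp, by simp, by simp [hk]⟩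
  | append_singleton Q x ih =>
    intro A k hA hk
    rcases hk.eq_or_lt with h | h
    · exact ⟨Q ++ [x], [], A, by simp, subset_rfl, hA, by simp, h.symm⟩
    · have h1 : A.ncard ≤ (A \ {x}).ncard + 1 := by
        have := Set.ncard_le_ncard_diff_add_ncard A {x}
        simpa using this
      obtain ⟨l1, l2, B, e, hB, hB1, hB2, hc⟩ := ih (A \ {x}) k (by
        rintro v ⟨hv, hx⟩
        have := hA hv
        simp at this hx ⊢
        tauto) (by omega)
      refine ⟨l1, l2 ++ [x], B, by simp [e], fun v hv => (hB hv).1, hB1, ?_, hc⟩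
      rintro v ⟨hv, hx⟩
      by_cases hvx : v = x
      · simp [hvx]
      · have := hB2 ⟨⟨hv, hvx⟩, hx⟩
        simp at this ⊢
        exact Or.inl this

open Dgraph in
theorem aux_system {V : Type} [Finite V] (D : Dgraph V) (ℓ p : ℕ) : ∀ (P : List V) (_ : D.IsPath P)
    (A : Set V) (_ : A ⊆ {v | v ∈ P}) (_ : A.ncard = 2 * ℓ * p),
    ∃ (Ps : Fin p → List V) (Ain Aout : Fin p → Set V),
      (∀ i, D.IsPath (Ps i)) ∧ (∀ i v, v ∈ Ps i → v ∈ P) ∧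
      (∀ i j, i ≠ j → ∀ v, v ∈ Ps i → v ∉ Ps j) ∧
      (∀ i, Ain i ⊆ A ∧ (Ain i).ncard = ℓ ∧ Aout i ⊆ A ∧ (Aout i).ncard = ℓ) ∧
      (∀ i, ∃ l1 l2 : List V, Ps i = l1 ++ l2 ∧
        Ain i ⊆ {v | v ∈ l1} ∧ Aout i ⊆ {v | v ∈ l2}) := by
  induction p with
  | zero =>
    intro P _ A _ _
    exact ⟨fun _ => [], fun _ => ∅, fun _ => ∅, fun i => i.elim0, fun i => i.elim0,
      fun i => i.elim0, fun i => i.elim0, fun i => i.elim0⟩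
  | succ p ih =>
    intro P hP A hA hc
    have hc' : A.ncard = ℓ + (ℓ + 2 * ℓ * p) := by rw [hc]; ring
    obtain ⟨a, b, B, e, hB, hBa, hBb, hBc⟩ := aux_split P A ℓ hA (by omega)
    have hd := Set.ncard_sdiff_add_ncard_of_subset hB
    obtain ⟨c, d, C, e', hC, hCa, hCb, hCc⟩ := aux_split b (A \ B) ℓ hBb (by omega)
    have hd' := Set.ncard_sdiff_add_ncard_of_subset hC
    subst e'
    subst e
    rw [← List.append_assoc] at hP
    obtain ⟨hn, hch⟩ := hP
    have hn' := List.nodup_append'.1 hn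
    have hch' := List.isChain_append.1 hch
    obtain ⟨Ps, Ain, Aout, h1, h2, h3, h4, h5⟩ := ih d ⟨hn'.2.1, hch'.2.1⟩ ((A \ B) \ C) hCb (by omega)
    refine ⟨Fin.cons (a ++ c) Ps, Fin.cons B Ain, Fin.cons C Aout, ?_, ?_, ?_, ?_, ?_⟩
    · refine Fin.cases ?_ ?_
      · exact ⟨hn'.1, hch'.1⟩
      · exact h1
    · refine Fin.cases ?_ ?_
      · intro v hv
        simp at hv ⊢
        tauto
      · intro i v hv
        have := h2 i v hv
        simp [this]
    · refine Fin.cases ?_ ?_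
      · refine Fin.cases ?_ ?_
        · simp
        · intro j _ v hv hw
          exact hn'.2.2 hv (h2 j v hw)
      · intro i
        refine Fin.cases ?_ ?_
        · intro _ v hv hw
          exact hn'.2.2 hw (h2 i v hv)
        · intro j hij v hv
          exact h3 i j (fun h => hij (by rw [h])) v hv
    · refine Fin.cases ?_ ?_
      · exact ⟨hB, hBc, fun v hv => (hC hv).1, hCc⟩
      · intro i
        obtain ⟨q1, q2, q3, q4⟩ := h4 i
        exact ⟨fun v hv => (q1 hv).1.1, q2, fun v hv => (q3 hv).1.1, q4⟩
    · refine Fin.cases ?_ ?_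
      · exact ⟨a, c, rfl, hBa, hCa⟩
      · exact h5

open Dgraph in
/-- if `P` is a directed path in the finite digraph `D` and `A ⊆ V(P)` is a
well-linked set with `|A| = 2ℓp`, then `D` contains an `ℓ`-linked path system of order
`p`: pairwise vertex-disjoint paths `Ps 1, …, Ps p`, well-linked sets `Ain i`, `Aout i`
of order `ℓ` with `Ain i ∪ Aout i ⊆ V(Ps i)` where all of `Ain i` appears in `Ps i`
before all of `Aout i`, and for all `i ≠ j` a linkage of size `ℓ` from `Aout i`
to `Ain j`. -/
theorem stmt15 {V : Type} [Finite V] (D : Dgraph V) (ℓ p : ℕ) (hl : 1 ≤ ℓ)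
    (hp : 1 ≤ p) (P : List V) (hP : D.IsPath P) (A : Set V) (hAP : A ⊆ {v | v ∈ P})
    (hA : D.WellLinked A) (hcard : A.ncard = 2 * ℓ * p) :
    ∃ (Ps : Fin p → List V) (Ain Aout : Fin p → Set V),
      (∀ i, D.IsPath (Ps i)) ∧
      (∀ i j, i ≠ j → ∀ v, v ∈ Ps i → v ∉ Ps j) ∧
      (∀ i, D.WellLinked (Ain i) ∧ (Ain i).ncard = ℓ ∧
        D.WellLinked (Aout i) ∧ (Aout i).ncard = ℓ) ∧
      (∀ i, Ain i ∪ Aout i ⊆ {v | v ∈ Ps i}) ∧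
      (∀ i, ∃ l1 l2 : List V, Ps i = l1 ++ l2 ∧
        Ain i ⊆ {v | v ∈ l1} ∧ Aout i ⊆ {v | v ∈ l2}) ∧
      (∀ i j, i ≠ j → D.HasDisjointPaths (Aout i) (Ain j) ℓ) := by
  obtain ⟨Ps, Ain, Aout, h1, h2, h3, h4, h5⟩ := aux_system D ℓ p P hP A hAP hcard
  have mono : ∀ B : Set V, B ⊆ A → D.WellLinked B := fun B hB X Y hX hY =>
    hA X Y (hX.trans hB) (hY.trans hB)
  have hin : ∀ i v, v ∈ Ain i → v ∈ Ps i := by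
    intro i v hv
    obtain ⟨l1, l2, e, ha, hb⟩ := h5 i
    have := ha hv
    rw [e]
    exact List.mem_append_left _ this
  have hout : ∀ i v, v ∈ Aout i → v ∈ Ps i := by
    intro i v hv
    obtain ⟨l1, l2, e, ha, hb⟩ := h5 i
    have := hb hv
    rw [e]
    exact List.mem_append_right _ this
  refine ⟨Ps, Ain, Aout, h1, h3, ?_, ?_, h5, ?_⟩
  · intro i
    obtain ⟨q1, q2, q3, q4⟩ := h4 i
    exact ⟨mono _ q1, q2, mono _ q3, q4⟩
  · rintro i v (hv | hv)
    · exact hin i v hv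
    · exact hout i v hv
  · intro i j hij
    have hdis : Disjoint (Aout i) (Ain j) := Set.disjoint_left.2 fun v hv hw =>
      h3 i j hij v (hout i v hv) (hin j v hw)
    have := hA _ _ (h4 i).2.2.1 (h4 j).1 hdis ((h4 i).2.2.2.trans (h4 j).2.1.symm)
    rwa [(h4 i).2.2.2] at this
end
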